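/- Let S_ℓ denote the real vector space of linear differential operators D of order at most ℓ on smooth functions on ℝ^n (Df = Σ_{|α|≤ℓ} c_α ∂^α f with smooth coefficients) that commute with Δ, i.e. Δ∘D = D∘Δ on smooth functions. Then the principal symbol map, sending D ∈ S_ℓ to the totally symmetric tensor field collecting its order-ℓ coefficients, is a linear surjection from S_ℓ onto the space 𝒦_ℓ of Killing ℓ-tensors, and its kernel equals S_{ℓ-1}, the space of commuting symmetries of order at most ℓ−1. -/

import Mathlib

/-! The full symbol of a differential operator on `ℝⁿ` is a polynomial `P` in momenta `X a` with
smooth coefficients, and `quant` turns it back into an operator `Q(P)`. The symbol is determined by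
the operator (`quant_injective`, by acting on exponentials), and the Leibniz rule gives
`[Δ, Q(P)] = Q(lapS P + 2 flowS P)` (`lapA_quant`), where `lapS` is the Laplacian on coefficients
and `flowS = X^a ∂_a`. Hence `Q(P)` commutes with `Δ` exactly when `lapS P + 2 flowS P = 0`.

Since `flowS` raises the degree in the momenta by one while `lapS` preserves it, the component of
top degree of this equation says that `flowS` kills the top-degree part of `P`
(`flowS_polyOf_last`). Under the dictionary between symmetric tensors and homogeneous polynomials
(`polyOf_eq_zero_iff`) this is the Killing equation for the principal symbol. The same dictionary
shows that the principal symbol vanishes exactly when the order-`ℓ` part of `P` does, which gives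
the kernel.

Surjectivity is Weyl quantization. With `divS = ∑ₐ ∂/∂xₐ ∂/∂Xₐ` one has `[divS, flowS] = lapS`,
and `divS` commutes with `lapS`, so `exp (divS / 2)` carries the kernel of `flowS` into the
solutions of the commutation equation (`lapS_add_flowS_weylSum`). For `K` the polynomial of a
Killing `ℓ`-tensor the exponential series is finite, and `K` is the top-degree part of the result.
-/

noncomputable section

/-- Partial derivative `∂_a f` in the `a`-th coordinate direction on `ℝⁿ`. -/
def pd {n : ℕ} (a : Fin n) (f : (Fin n → ℝ) → ℝ) : (Fin n → ℝ) → ℝ :=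
  fun x => fderiv ℝ f x (Pi.single a 1)

/-- Raised partial derivative `∂^a f = g^{ab} ∂_b f`. -/
def pdUp {n : ℕ} (ginv : Matrix (Fin n) (Fin n) ℝ) (a : Fin n)
    (f : (Fin n → ℝ) → ℝ) : (Fin n → ℝ) → ℝ :=
  fun x => ∑ b, ginv a b * pd b f x

/-- Laplace operator `Δ f = g^{ab} ∂_a ∂_b f`. -/
def lap {n : ℕ} (ginv : Matrix (Fin n) (Fin n) ℝ) (f : (Fin n → ℝ) → ℝ) :
    (Fin n → ℝ) → ℝ :=
  fun x => ∑ a, ∑ b, ginv a b * pd a (pd b f) x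

/-- Iterated partial derivative `∂_{i 0} ⋯ ∂_{i (m-1)} f` along a tuple of indices. -/
def pdIter {n : ℕ} : (m : ℕ) → (Fin m → Fin n) → ((Fin n → ℝ) → ℝ) → ((Fin n → ℝ) → ℝ)
  | 0, _, f => f
  | m + 1, i, f => pd (i 0) (pdIter m (fun j => i j.succ) f)

/-- A (smooth, totally symmetric) Killing `ℓ`-tensor: `∂^{(a₀} k^{a₁…a_ℓ)} = 0`. -/
def IsKillingTensor {n : ℕ} (ginv : Matrix (Fin n) (Fin n) ℝ) (ℓ : ℕ)
    (k : (Fin ℓ → Fin n) → (Fin n → ℝ) → ℝ) : Prop :=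
  (∀ i, ContDiff ℝ (⊤ : ℕ∞) (k i)) ∧
  (∀ (σ : Equiv.Perm (Fin ℓ)) (i : Fin ℓ → Fin n), k (i ∘ σ) = k i) ∧
  (∀ (i : Fin (ℓ + 1) → Fin n) (x : Fin n → ℝ),
    ∑ σ : Equiv.Perm (Fin (ℓ + 1)),
      pdUp ginv (i (σ 0)) (k (fun j => i (σ j.succ))) x = 0)

end

noncomputable section

/-- Coefficient data of a linear differential operator of order at most `ℓ`
on smooth functions on `ℝⁿ`. -/
abbrev Coeffs (n ℓ : ℕ) := (m : Fin (ℓ + 1)) → (Fin (m : ℕ) → Fin n) → (Fin n → ℝ) → ℝ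

/-- The differential operator determined by the coefficients `c`. -/
def applyOp {n ℓ : ℕ} (c : Coeffs n ℓ) (f : (Fin n → ℝ) → ℝ) : (Fin n → ℝ) → ℝ :=
  fun x => ∑ m : Fin (ℓ + 1), ∑ i : Fin (m : ℕ) → Fin n, c m i x * pdIter (m : ℕ) i f x

/-- All coefficients are smooth. -/
def SmoothCoeffs {n ℓ : ℕ} (c : Coeffs n ℓ) : Prop :=
  ∀ m i, ContDiff ℝ (⊤ : ℕ∞) (c m i)

/-- The operator given by the coefficients `c` commutes with the Laplacian on
smooth functions. -/
def CommutesWithLap {n ℓ : ℕ} (ginv : Matrix (Fin n) (Fin n) ℝ) (c : Coeffs n ℓ) : Prop :=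
  ∀ f, ContDiff ℝ (⊤ : ℕ∞) f →
    ∀ x, lap ginv (applyOp c f) x = applyOp c (lap ginv f) x

/-- The principal symbol: the symmetrization of the order-`ℓ` coefficients. -/
def psymb {n ℓ : ℕ} (c : Coeffs n ℓ) : (Fin ℓ → Fin n) → (Fin n → ℝ) → ℝ :=
  fun i x => (ℓ.factorial : ℝ)⁻¹ * ∑ σ : Equiv.Perm (Fin ℓ), c (Fin.last ℓ) (i ∘ σ) x

/-! ### Smooth functions and full symbols -/

/-- The algebra of smooth real functions on `ℝⁿ`. -/
def smAlg (n : ℕ) : Subalgebra ℝ ((Fin n → ℝ) → ℝ) where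
  carrier := {f | ContDiff ℝ (⊤ : ℕ∞) f}
  mul_mem' {f g} (hf : ContDiff ℝ (⊤ : ℕ∞) f) (hg : ContDiff ℝ (⊤ : ℕ∞) g) :=
    (ContDiff.mul hf hg : ContDiff ℝ (⊤ : ℕ∞) _)
  add_mem' {f g} (hf : ContDiff ℝ (⊤ : ℕ∞) f) (hg : ContDiff ℝ (⊤ : ℕ∞) g) :=
    (ContDiff.add hf hg : ContDiff ℝ (⊤ : ℕ∞) _)
  algebraMap_mem' r := (contDiff_const : ContDiff ℝ (⊤ : ℕ∞) fun _ : Fin n → ℝ => r)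

/-- Smooth real functions on `ℝⁿ`, as a commutative `ℝ`-algebra. -/
abbrev SmFun (n : ℕ) : Type := smAlg n

theorem contDiff_pd {n : ℕ} (a : Fin n) {f : (Fin n → ℝ) → ℝ} (hf : ContDiff ℝ (⊤ : ℕ∞) f) :
    ContDiff ℝ (⊤ : ℕ∞) (pd a f) := by
  unfold pd
  exact (hf.fderiv_right (m := (⊤ : ℕ∞)) (by norm_cast)).clm_apply contDiff_const

theorem pd_comm {n : ℕ} (a b : Fin n) {f : (Fin n → ℝ) → ℝ} (hf : ContDiff ℝ (⊤ : ℕ∞) f) :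
    pd a (pd b f) = pd b (pd a f) := by
  funext x
  have h1 : ∀ c d : Fin n, pd c (pd d f) x =
      fderiv ℝ (fderiv ℝ f) x (Pi.single c 1) (Pi.single d 1) := by
    intro c d
    unfold pd
    have hd : DifferentiableAt ℝ (fderiv ℝ f) x :=
      ((hf.fderiv_right (m := (⊤ : ℕ∞)) (by norm_cast)).differentiable (by simp)) x
    rw [fderiv_clm_apply hd (differentiableAt_const _)]
    simp
  rw [h1, h1]
  exact (hf.contDiffAt.isSymmSndFDerivAt
    (by simpa using (show ((2 : ℕ∞) : WithTop ℕ∞) ≤ _ from WithTop.coe_le_coe.2 le_top))) _ _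

theorem SmFun.diff {n : ℕ} (f : SmFun n) : Differentiable ℝ (f : (Fin n → ℝ) → ℝ) :=
  ContDiff.differentiable (n := (⊤ : ℕ∞)) f.2 (by simp)

/-- The partial derivative `∂_a`, as a derivation of the algebra of smooth functions. -/
def pdD {n : ℕ} (a : Fin n) : Derivation ℝ (SmFun n) (SmFun n) :=
  Derivation.mk'
   { toFun := fun f => ⟨pd a f.1, contDiff_pd a f.2⟩
     map_add' := fun f g => by
      apply Subtype.ext; funext x
      have hf := (SmFun.diff f) x
      have hg := (SmFun.diff g) x
      change fderiv ℝ (f.1 + g.1) x _ = fderiv ℝ f.1 x _ + fderiv ℝ g.1 x _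
      rw [fderiv_add hf hg]; rfl
     map_smul' := fun r f => by
      apply Subtype.ext; funext x
      have hf := (SmFun.diff f) x
      change fderiv ℝ (r • f.1) x _ = r * fderiv ℝ f.1 x _
      rw [fderiv_const_smul hf]; rfl }
   (fun f g => by
      apply Subtype.ext; funext x
      have hf := (SmFun.diff f) x
      have hg := (SmFun.diff g) x
      change fderiv ℝ (f.1 * g.1) x _ = f.1 x * fderiv ℝ g.1 x _ + g.1 x * fderiv ℝ f.1 x _
      rw [fderiv_mul hf hg]; rfl)

@[simp] theorem coe_pdD {n : ℕ} (a : Fin n) (f : SmFun n) : (pdD a f : (Fin n → ℝ) → ℝ) = pd a f :=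
  rfl

theorem pdD_comm {n : ℕ} (a b : Fin n) (f : SmFun n) : pdD a (pdD b f) = pdD b (pdD a f) :=
  Subtype.ext (pd_comm a b f.2)

open MvPolynomial

/-- Full symbols of differential operators: polynomials in the momenta `X a`, standing for `∂_a`,
with smooth functions as coefficients. -/
abbrev Sy (n : ℕ) := MvPolynomial (Fin n) (SmFun n)

open scoped IsMulCommutative in
/-- As the `∂_a` commute, they generate a commutative subalgebra of the endomorphisms, so real
polynomials can be evaluated at them. -/
theorem exists_constOp (n : ℕ) : ∃ φ : MvPolynomial (Fin n) ℝ →ₐ[ℝ] Module.End ℝ (SmFun n),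
    ∀ a, φ (X a) = (pdD a).toLinearMap := by
  let s : Set (Module.End ℝ (SmFun n)) := Set.range fun a => (pdD a).toLinearMap
  have hs : ∀ a ∈ s, ∀ b ∈ s, a * b = b * a := by
    rintro _ ⟨a, rfl⟩ _ ⟨b, rfl⟩
    exact LinearMap.ext fun f => pdD_comm a b f
  have := Algebra.isMulCommutative_adjoin ℝ hs
  refine ⟨(Algebra.adjoin ℝ s).val.comp
    (aeval fun a => ⟨_, Algebra.subset_adjoin (Set.mem_range_self a)⟩), fun a => ?_⟩
  simp

/-- The constant-coefficient differential operator `p(∂)` attached to a real polynomial `p`. -/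
def constOp (n : ℕ) : MvPolynomial (Fin n) ℝ →ₐ[ℝ] Module.End ℝ (SmFun n) :=
  (exists_constOp n).choose

theorem constOp_X {n : ℕ} (a : Fin n) (f : SmFun n) : constOp n (X a) f = pdD a f := by
  rw [constOp, (exists_constOp n).choose_spec]; rfl

/-- The differential operator with full symbol `P`, in normal order: the coefficient functions
stand to the left of the derivatives. -/
def quant (n : ℕ) : Sy n →ₗ[SmFun n] Module.End ℝ (SmFun n) :=
  (basisMonomials (Fin n) (SmFun n)).constr (SmFun n) fun α => constOp n (monomial α 1)

theorem quant_monomial {n : ℕ} (α : Fin n →₀ ℕ) (c : SmFun n) (f : SmFun n) :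
    quant n (monomial α c) f = c * constOp n (monomial α 1) f := by
  have : (monomial α c : Sy n) = c • basisMonomials (Fin n) (SmFun n) α := by
    simp [smul_monomial]
  rw [this, map_smul, quant, Module.Basis.constr_basis]
  rfl

theorem quant_one {n : ℕ} (f : SmFun n) : quant n 1 f = f := by
  have := quant_monomial 0 (1 : SmFun n) f
  rw [show (monomial 0 1 : Sy n) = 1 from rfl,
    show (monomial 0 1 : MvPolynomial (Fin n) ℝ) = 1 from rfl] at this
  simpa using this

theorem quant_C_mul {n : ℕ} (c : SmFun n) (P : Sy n) (f : SmFun n) :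
    quant n (C c * P) f = c * quant n P f := by
  rw [← smul_eq_C_mul, map_smul]; rfl

theorem quant_X_mul {n : ℕ} (a : Fin n) (P : Sy n) (f : SmFun n) :
    quant n (X a * P) f = quant n P (pdD a f) := by
  induction P using MvPolynomial.induction_on' with
  | monomial α c =>
    rw [X, monomial_mul, quant_monomial, quant_monomial, one_mul, add_comm,
      show (monomial (α + Finsupp.single a 1) 1 : MvPolynomial (Fin n) ℝ) = monomial α 1 * X a by
        rw [X, monomial_mul, one_mul], map_mul, Module.End.mul_apply, constOp_X]
  | add p q hp hq =>
    rw [mul_add, map_add, map_add, LinearMap.add_apply, LinearMap.add_apply, hp, hq]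

/-! ### The commutator with the Laplacian -/

/-- `∂_a` applied to each coefficient of a symbol, the momenta being held fixed. -/
def coefD {n : ℕ} (a : Fin n) : Sy n →ₗ[ℝ] Sy n where
  toFun := AddMonoidAlgebra.map (pdD a).toLinearMap.toAddMonoidHom
  map_add' p q := by simp [AddMonoidAlgebra.map_add]
  map_smul' r p := by
    refine MvPolynomial.ext _ _ fun α => ?_
    change pdD a (coeff α (r • p)) = coeff α (r • AddMonoidAlgebra.map _ p)
    rw [coeff_smul, coeff_smul, Derivation.map_smul]
    rfl

theorem coeff_coefD {n : ℕ} (a : Fin n) (P : Sy n) (α) :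
    coeff α (coefD a P) = pdD a (coeff α P) := rfl

theorem coefD_monomial {n : ℕ} (a : Fin n) (α) (c : SmFun n) :
    coefD a (monomial α c) = monomial α (pdD a c) := by
  refine MvPolynomial.ext _ _ fun β => ?_
  rw [coeff_coefD, coeff_monomial, coeff_monomial]
  split_ifs <;> simp

theorem coefD_comm {n : ℕ} (a b : Fin n) (P : Sy n) :
    coefD a (coefD b P) = coefD b (coefD a P) :=
  MvPolynomial.ext _ _ fun α => by simp only [coeff_coefD]; exact pdD_comm a b _

theorem coefD_X_mul {n : ℕ} (a b : Fin n) (P : Sy n) :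
    coefD a (X b * P) = X b * coefD a P := by
  induction P using MvPolynomial.induction_on' with
  | monomial α c => simp only [X, monomial_mul, coefD_monomial, one_mul]
  | add p q hp hq => simp only [mul_add, map_add, hp, hq]

theorem coefD_pderiv {n : ℕ} (a b : Fin n) (P : Sy n) :
    coefD a (pderiv b P) = pderiv b (coefD a P) := by
  induction P using MvPolynomial.induction_on' with
  | monomial α c =>
    simp only [pderiv_monomial, coefD_monomial, Derivation.leibniz, Derivation.map_natCast,
      smul_eq_mul]
    congr 1
    ring
  | add p q hp hq => simp only [map_add, hp, hq]

/-- `∂_a ∘ Q(P) = Q(∂_a P + X_a P)`, where `Q` is `quant`. -/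
theorem pdD_quant {n : ℕ} (a : Fin n) (P : Sy n) (f : SmFun n) :
    pdD a (quant n P f) = quant n (coefD a P + X a * P) f := by
  induction P using MvPolynomial.induction_on' with
  | monomial α c =>
    rw [map_add, LinearMap.add_apply, quant_X_mul, coefD_monomial, quant_monomial, quant_monomial,
      quant_monomial, Derivation.leibniz]
    have : pdD a (constOp n (monomial α 1) f) = constOp n (monomial α 1) (pdD a f) := by
      rw [← constOp_X, ← constOp_X, ← Module.End.mul_apply, ← Module.End.mul_apply, ← map_mul,
        ← map_mul, mul_comm]
    rw [this]
    simp only [smul_eq_mul]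
    ring
  | add p q hp hq =>
    simp only [mul_add, map_add, LinearMap.add_apply] at hp hq ⊢
    rw [hp, hq]; abel

/-- The Laplacian on smooth functions. -/
def lapA {n : ℕ} (G : Matrix (Fin n) (Fin n) ℝ) (f : SmFun n) : SmFun n :=
  ∑ a, ∑ b, G a b • pdD a (pdD b f)

theorem coe_lapA {n : ℕ} (G : Matrix (Fin n) (Fin n) ℝ) (f : SmFun n) :
    (lapA G f : (Fin n → ℝ) → ℝ) = lap G f := by
  funext x
  simp [lapA, lap]

/-- The Laplacian applied to each coefficient of a symbol. -/
def lapS {n : ℕ} (G : Matrix (Fin n) (Fin n) ℝ) : Sy n →ₗ[ℝ] Sy n :=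
  ∑ a, ∑ b, G a b • (coefD a ∘ₗ coefD b)

/-- The operator `X^a ∂_a` on symbols, i.e. half the derivation along the Hamiltonian vector field
of `g^{ab} X_a X_b` (geodesic flow). On the homogeneous polynomial of a symmetric tensor it is the
Killing operator. -/
def flowS {n : ℕ} (G : Matrix (Fin n) (Fin n) ℝ) : Sy n →ₗ[ℝ] Sy n :=
  ∑ a, ∑ b, G a b • (LinearMap.mulLeft ℝ (X a) ∘ₗ coefD b)

/-- The divergence `∑ₐ ∂/∂xₐ ∂/∂Xₐ` on symbols. -/
def divS (n : ℕ) : Sy n →ₗ[ℝ] Sy n :=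
  ∑ a, coefD a ∘ₗ (pderiv a).toLinearMap.restrictScalars ℝ

theorem lapS_apply {n : ℕ} (G : Matrix (Fin n) (Fin n) ℝ) (P : Sy n) :
    lapS G P = ∑ a, ∑ b, G a b • coefD a (coefD b P) := by
  simp [lapS]

theorem flowS_apply {n : ℕ} (G : Matrix (Fin n) (Fin n) ℝ) (P : Sy n) :
    flowS G P = ∑ a, ∑ b, G a b • (X a * coefD b P) := by
  simp [flowS]

theorem divS_apply {n : ℕ} (P : Sy n) : divS n P = ∑ a, coefD a (pderiv a P) := by
  simp [divS]

theorem quant_smul {n : ℕ} (r : ℝ) (P : Sy n) (f : SmFun n) :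
    quant n (r • P) f = r • quant n P f := by
  rw [← algebraMap_smul (SmFun n) r P, map_smul, LinearMap.smul_apply, algebraMap_smul]

/-- `[Δ, Q(P)] = Q(lapS P + 2 flowS P)`, where `Q` is `quant`. -/
theorem lapA_quant {n : ℕ} (G : Matrix (Fin n) (Fin n) ℝ) (hG : G.IsSymm) (P : Sy n)
    (f : SmFun n) :
    lapA G (quant n P f) = quant n (lapS G P + (2 : ℝ) • flowS G P) f + quant n P (lapA G f) := by
  have key : lapS G P + (2 : ℝ) • flowS G P + ∑ a, ∑ b, G a b • (X b * (X a * P))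
      = ∑ a, ∑ b, G a b • (coefD a (coefD b P + X b * P) + X a * (coefD b P + X b * P)) := by
    have hsw : flowS G P = ∑ a, ∑ b, G a b • (X b * coefD a P) := by
      rw [flowS_apply, Finset.sum_comm]
      refine Finset.sum_congr rfl fun a _ => Finset.sum_congr rfl fun b _ => ?_
      rw [hG.apply]
    rw [two_smul]
    nth_rewrite 2 [hsw]
    rw [flowS_apply, lapS_apply]
    simp only [← Finset.sum_add_distrib, ← smul_add]
    refine Finset.sum_congr rfl fun a _ => Finset.sum_congr rfl fun b _ => ?_
    rw [map_add, coefD_X_mul]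
    congr 1
    ring
  have h1 : lapA G (quant n P f)
      = quant n (lapS G P + (2 : ℝ) • flowS G P + ∑ a, ∑ b, G a b • (X b * (X a * P))) f := by
    rw [key, lapA]
    simp only [map_sum, LinearMap.sum_apply, quant_smul, pdD_quant]
  rw [h1, map_add, LinearMap.add_apply]
  congr 1
  simp only [lapA, map_sum, LinearMap.sum_apply, quant_smul, quant_X_mul, LinearMap.map_smul]

/-! ### Weyl ordering -/

theorem divS_coefD {n : ℕ} (a : Fin n) (P : Sy n) : divS n (coefD a P) = coefD a (divS n P) := by
  simp only [divS_apply, map_sum, ← coefD_pderiv, coefD_comm a]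

theorem divS_X_mul {n : ℕ} (a : Fin n) (P : Sy n) :
    divS n (X a * P) = X a * divS n P + coefD a P := by
  simp only [divS_apply, pderiv_mul, pderiv_X, map_add, coefD_X_mul, Finset.sum_add_distrib,
    Finset.mul_sum]
  rw [add_comm]
  congr 1
  rw [Finset.sum_eq_single a]
  · simp
  · intro b _ hb
    simp [hb.symm]
  · simp

theorem lapS_divS {n : ℕ} (G : Matrix (Fin n) (Fin n) ℝ) (P : Sy n) :
    lapS G (divS n P) = divS n (lapS G P) := by
  simp only [lapS_apply, map_sum, LinearMap.map_smul, divS_coefD]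

/-- `[divS, flowS] = lapS`; together with `lapS_divS`, this makes `exp (divS / 2)` intertwine
`2 flowS + lapS` with `2 flowS`. -/
theorem divS_flowS {n : ℕ} (G : Matrix (Fin n) (Fin n) ℝ) (P : Sy n) :
    divS n (flowS G P) = flowS G (divS n P) + lapS G P := by
  simp only [flowS_apply, lapS_apply, map_sum, LinearMap.map_smul, divS_coefD, divS_X_mul,
    smul_add, Finset.sum_add_distrib]

theorem lapS_divS_pow {n : ℕ} (G : Matrix (Fin n) (Fin n) ℝ) (j : ℕ) (P : Sy n) :
    lapS G ((divS n ^ j) P) = (divS n ^ j) (lapS G P) := by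
  induction j with
  | zero => rfl
  | succ j ih => rw [pow_succ', Module.End.mul_apply, Module.End.mul_apply, lapS_divS, ih]

theorem flowS_divS_pow {n : ℕ} (G : Matrix (Fin n) (Fin n) ℝ) (P : Sy n) (hP : flowS G P = 0)
    (j : ℕ) :
    flowS G ((divS n ^ (j + 1)) P) = -((j + 1 : ℝ) • lapS G ((divS n ^ j) P)) := by
  have step (Q : Sy n) : flowS G (divS n Q) = divS n (flowS G Q) - lapS G Q := by
    rw [divS_flowS]; abel
  induction j with
  | zero => simp [step, hP]
  | succ j ih =>
    rw [pow_succ', Module.End.mul_apply, step, ih, map_neg, LinearMap.map_smul, ← lapS_divS,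
      ← Module.End.mul_apply (divS n), ← pow_succ']
    push_cast
    module

/-- The partial sum, over the exponents `j < m`, of the exponential series of `divS / 2` applied
to `P`. The full exponential converts Weyl-ordered symbols into normally ordered ones. -/
def weylSum {n : ℕ} (m : ℕ) (P : Sy n) : Sy n :=
  ∑ j ∈ Finset.range m, ((2 : ℝ) ^ j * j.factorial)⁻¹ • (divS n ^ j) P

theorem weylSum_succ {n : ℕ} (m : ℕ) (P : Sy n) :
    weylSum (m + 1) P = weylSum m P + ((2 : ℝ) ^ m * m.factorial)⁻¹ • (divS n ^ m) P :=
  Finset.sum_range_succ _ _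

/-- If `flowS P = 0`, then `exp (divS / 2) P` satisfies the commutation equation. At finite level
the two truncations differ by one, because `lapS` preserves the degree in the momenta whereas
`flowS` raises it. -/
theorem lapS_add_flowS_weylSum {n : ℕ} (G : Matrix (Fin n) (Fin n) ℝ) (P : Sy n)
    (hP : flowS G P = 0) (m : ℕ) :
    lapS G (weylSum m P) + (2 : ℝ) • flowS G (weylSum (m + 1) P) = 0 := by
  induction m with
  | zero => simp [weylSum, hP]
  | succ m ih =>
    rw [weylSum_succ m, weylSum_succ (m + 1), map_add, map_add, smul_add, add_add_add_comm, ih,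
      zero_add, LinearMap.map_smul, LinearMap.map_smul, flowS_divS_pow G P hP, Nat.factorial_succ]
    have h : (m.factorial : ℝ) ≠ 0 := by positivity
    have h2 : (m + 1 : ℝ) ≠ 0 := by positivity
    rw [smul_neg, smul_neg, smul_smul, smul_smul, ← sub_eq_add_neg, sub_eq_zero]
    congr 1
    push_cast
    field_simp
    ring

/-! ### Injectivity of the full symbol calculus -/

/-- The exponential function `x ↦ exp (ξ · x)`. -/
def expFun {n : ℕ} (ξ : Fin n → ℝ) : SmFun n :=
  ⟨fun x => Real.exp (∑ a, ξ a * x a), by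
    change ContDiff ℝ (⊤ : ℕ∞) _
    fun_prop⟩

theorem pdD_expFun {n : ℕ} (a : Fin n) (ξ : Fin n → ℝ) : pdD a (expFun ξ) = ξ a • expFun ξ := by
  apply Subtype.ext
  funext x
  change fderiv ℝ (fun x : Fin n → ℝ => Real.exp (∑ a, ξ a * x a)) x (Pi.single a 1)
    = ξ a * Real.exp (∑ a, ξ a * x a)
  have h : HasFDerivAt (fun x : Fin n → ℝ => ∑ a, ξ a * x a)
      (∑ a, ξ a • ContinuousLinearMap.proj (R := ℝ) (φ := fun _ : Fin n => ℝ) a) x :=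
    HasFDerivAt.fun_sum fun b _ => (hasFDerivAt_apply b x).const_mul (ξ b)
  rw [h.exp.fderiv]
  simp [Pi.single_apply, mul_comm]

theorem quant_expFun {n : ℕ} (P : Sy n) (ξ : Fin n → ℝ) :
    quant n P (expFun ξ) = eval (fun a => algebraMap ℝ (SmFun n) (ξ a)) P * expFun ξ := by
  induction P using MvPolynomial.induction_on with
  | C c => rw [← mul_one (C c), quant_C_mul, quant_one, mul_one, eval_C]
  | add p q hp hq => rw [map_add, LinearMap.add_apply, hp, hq, map_add, add_mul]
  | mul_X p a hp =>
    rw [mul_comm p, quant_X_mul, pdD_expFun, LinearMap.map_smul, hp, map_mul, eval_X,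
      Algebra.smul_def, mul_assoc]

/-- An operator determines its full symbol: acting on `exp (ξ · x)` it multiplies by the value of
the symbol at `ξ`, and a real polynomial vanishing at every `ξ` is zero. -/
theorem quant_injective {n : ℕ} (P : Sy n) (h : ∀ f, quant n P f = 0) : P = 0 := by
  let ev : (Fin n → ℝ) → SmFun n →+* ℝ := fun x =>
    (Pi.evalRingHom (fun _ => ℝ) x).comp (smAlg n).val.toRingHom
  have hev (x ξ) (P : Sy n) :
      eval ξ (map (ev x) P) = ev x (eval (fun a => algebraMap ℝ (SmFun n) (ξ a)) P) := by
    induction P using MvPolynomial.induction_on with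
    | C c => simp
    | add p q hp hq => simp only [map_add, hp, hq]
    | mul_X p a hp =>
      simp only [map_mul, hp, map_X, eval_X]
      congr 1
  have hmap (x) : map (ev x) P = 0 := by
    refine MvPolynomial.funext fun ξ => ?_
    have h1 := congrArg (ev x) (quant_expFun P ξ)
    rw [h, map_zero, map_mul] at h1
    have h2 : ev x (expFun ξ) ≠ 0 := (Real.exp_pos _).ne'
    rw [hev, map_zero]
    exact (mul_eq_zero.1 h1.symm).resolve_right h2
  refine MvPolynomial.ext _ _ fun α => Subtype.ext (funext fun x => ?_)
  have := congrArg (coeff α) (hmap x)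
  rw [coeff_map] at this
  exact this

theorem coefD_C_mul {n : ℕ} (a : Fin n) (c : SmFun n) (P : Sy n) :
    coefD a (C c * P) = C (pdD a c) * P + C c * coefD a P := by
  induction P using MvPolynomial.induction_on' with
  | monomial α d =>
    simp only [C_mul_monomial, coefD_monomial, Derivation.leibniz, smul_eq_mul, ← map_add]
    congr 1; ring
  | add p q hp hq => simp only [mul_add, map_add, hp, hq]; abel

theorem coefD_prod_X {n m : ℕ} (a : Fin n) (i : Fin m → Fin n) :
    coefD a (∏ j, X (i j)) = 0 := by
  induction m with
  | zero =>
    rw [Fin.prod_univ_zero]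
    change coefD a (monomial 0 1) = 0
    rw [coefD_monomial, Derivation.map_one_eq_zero, map_zero]
  | succ m ih => rw [Fin.prod_univ_succ, coefD_X_mul, ih, mul_zero]

theorem coe_quant_prod_X {n m : ℕ} (i : Fin m → Fin n) (f : SmFun n) :
    (quant n (∏ j, X (i j)) f : (Fin n → ℝ) → ℝ) = pdIter m i f := by
  induction m with
  | zero => rw [Fin.prod_univ_zero, quant_one]; rfl
  | succ m ih =>
    have h := pdD_quant (i 0) (∏ j : Fin m, X (i j.succ)) f
    rw [coefD_prod_X, zero_add] at h
    rw [Fin.prod_univ_succ, ← h, coe_pdD, ih]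
    rfl

/-! ### Symmetric tensors and homogeneous symbols -/

/-- The homogeneous symbol `∑ c^{i₁…i_m} X_{i₁} ⋯ X_{i_m}` of a tensor `c`, which need not be
symmetric. -/
def polyOf {n m : ℕ} (c : (Fin m → Fin n) → SmFun n) : Sy n :=
  ∑ i, C (c i) * ∏ j, X (i j)

theorem polyOf_zero {n m : ℕ} : polyOf (0 : (Fin m → Fin n) → SmFun n) = 0 := by
  simp [polyOf]

theorem polyOf_add {n m : ℕ} (c c' : (Fin m → Fin n) → SmFun n) :
    polyOf (c + c') = polyOf c + polyOf c' := by
  simp [polyOf, add_mul, Finset.sum_add_distrib]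

theorem polyOf_smul {n m : ℕ} (r : ℝ) (c : (Fin m → Fin n) → SmFun n) :
    polyOf (r • c) = r • polyOf c := by
  simp only [polyOf, Finset.smul_sum, Pi.smul_apply]
  refine Finset.sum_congr rfl fun i _ => ?_
  rw [Algebra.smul_def, Algebra.smul_def, map_mul, MvPolynomial.algebraMap_apply, mul_assoc]

theorem quant_polyOf {n m : ℕ} (c : (Fin m → Fin n) → SmFun n) (f : SmFun n) (x : Fin n → ℝ) :
    (quant n (polyOf c) f : (Fin n → ℝ) → ℝ) x =
      ∑ i, (c i : (Fin n → ℝ) → ℝ) x * pdIter m i f x := by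
  simp [polyOf, quant_C_mul, coe_quant_prod_X]

theorem coefD_polyOf {n m : ℕ} (a : Fin n) (c : (Fin m → Fin n) → SmFun n) :
    coefD a (polyOf c) = polyOf fun i => pdD a (c i) := by
  simp [polyOf, coefD_C_mul, coefD_prod_X]

theorem flowS_polyOf {n m : ℕ} (G : Matrix (Fin n) (Fin n) ℝ) (c : (Fin m → Fin n) → SmFun n) :
    flowS G (polyOf c) = polyOf fun i : Fin (m + 1) → Fin n =>
      ∑ b, G (i 0) b • pdD b (c fun j => i j.succ) := by
  rw [flowS_apply, polyOf.eq_def fun i : Fin (m + 1) → Fin n => _,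
    ← (Fin.consEquiv fun _ => Fin n).sum_comp, Fintype.sum_prod_type]
  refine Finset.sum_congr rfl fun a _ => ?_
  simp only [coefD_polyOf]
  simp only [polyOf, Finset.mul_sum, Finset.smul_sum]
  rw [Finset.sum_comm]
  refine Finset.sum_congr rfl fun i _ => ?_
  rw [map_sum, Finset.sum_mul]
  refine Finset.sum_congr rfl fun b _ => ?_
  simp only [Fin.consEquiv_apply, Fin.prod_univ_succ, Fin.cons_zero, Fin.cons_succ,
    Algebra.smul_def, map_mul]
  rw [MvPolynomial.algebraMap_apply]
  ring

theorem isHomogeneous_polyOf {n m : ℕ} (c : (Fin m → Fin n) → SmFun n) :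
    (polyOf c).IsHomogeneous m := by
  rw [polyOf]
  refine IsHomogeneous.sum _ _ _ fun i _ => ?_
  have h := (isHomogeneous_C (Fin n) (c i)).mul
    (IsHomogeneous.prod Finset.univ (fun j => (X (i j) : Sy n)) (fun _ => 1)
      fun j _ => isHomogeneous_X _ _)
  simpa using h

theorem prod_X_eq {n m : ℕ} (i : Fin m → Fin n) :
    (∏ j, X (i j) : Sy n) = monomial (∑ j, Finsupp.single (i j) 1) 1 := by
  rw [monomial_sum_one]
  rfl

/-- Every homogeneous symbol of degree `m` comes from an `m`-tensor: each monomial is written with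
its variables in some chosen order. -/
theorem exists_polyOf {n m : ℕ} {P : Sy n} (hP : P.IsHomogeneous m) :
    ∃ c : (Fin m → Fin n) → SmFun n, polyOf c = P := by
  rw [P.as_sum]
  refine Finset.sum_induction _ (fun Q => ∃ c : (Fin m → Fin n) → SmFun n, polyOf c = Q) ?_ ?_ ?_
  · rintro _ _ ⟨c, rfl⟩ ⟨c', rfl⟩
    exact ⟨c + c', polyOf_add c c'⟩
  · exact ⟨0, polyOf_zero⟩
  intro α hα
  have hdeg : α.degree = m := by
    have := hP (mem_support_iff.1 hα)
    rwa [Finsupp.degree_eq_weight_one]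
  obtain ⟨l, hl⟩ := Quot.exists_rep (Finsupp.toMultiset α)
  have hl' : (l : Multiset (Fin n)) = Finsupp.toMultiset α := hl
  have hm : l.length = m := by
    rw [← hdeg, ← Multiset.coe_card, hl', Finsupp.card_toMultiset]
    rfl
  subst hm
  refine ⟨Pi.single (fun j => l[j]) (coeff α P), ?_⟩
  rw [polyOf, Finset.sum_eq_single (fun j => l[j])]
  · rw [Pi.single_eq_same, prod_X_eq, C_mul_monomial, mul_one]
    refine congrArg (fun β => monomial β (coeff α P)) ?_
    refine (Finsupp.orderIsoMultiset (ι := Fin n)).injective ?_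
    change Finsupp.toMultiset _ = Finsupp.toMultiset α
    rw [← hl', map_sum]
    simp only [Finsupp.toMultiset_single, one_smul]
    refine (Fin.sum_univ_fun_getElem l fun a => ({a} : Multiset (Fin n))).trans ?_
    exact Multiset.sum_map_singleton (l : Multiset (Fin n))
  · intro i _ hi
    rw [Pi.single_eq_of_ne hi, map_zero]
    exact zero_mul (∏ j, X (i j) : Sy n)
  · intro h
    exact absurd (Finset.mem_univ _) h

/-- Two index tuples with the same monomial differ by a permutation of the positions. -/
theorem exists_perm {n m : ℕ} (i i' : Fin m → Fin n)
    (h : ∑ j, Finsupp.single (i j) 1 = ∑ j, Finsupp.single (i' j) 1) :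
    ∃ σ : Equiv.Perm (Fin m), i' = i ∘ σ := by
  have hc (a) : Nonempty ({j // i' j = a} ≃ {j // i j = a}) := by
    rw [← Fintype.card_eq, Fintype.card_subtype, Fintype.card_subtype]
    have := DFunLike.congr_fun h a
    simpa [Finsupp.finsetSum_apply, Finsupp.single_apply, eq_comm] using this
  refine ⟨Equiv.ofFiberEquiv fun a => (hc a).some, funext fun j => ?_⟩
  exact (Equiv.ofFiberEquiv_map _ j).symm

theorem polyOf_symmetrize {n m : ℕ} (c : (Fin m → Fin n) → SmFun n) :
    polyOf (fun i => ∑ σ : Equiv.Perm (Fin m), c (i ∘ σ)) = (m.factorial : ℝ) • polyOf c := by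
  have h (σ : Equiv.Perm (Fin m)) : polyOf (fun i => c (i ∘ σ)) = polyOf c := by
    rw [polyOf, polyOf, ← (σ.arrowCongr (Equiv.refl (Fin n))).sum_comp]
    refine Finset.sum_congr rfl fun i _ => ?_
    congr 1
    · congr 2
      funext j
      simp
    · rw [← Equiv.prod_comp σ]
      simp
  have h2 (s : Finset (Equiv.Perm (Fin m))) :
      polyOf (fun i => ∑ σ ∈ s, c (i ∘ σ)) = (s.card : ℝ) • polyOf c := by
    classical
    induction s using Finset.induction_on with
    | empty =>
      simp only [Finset.sum_empty, Finset.card_empty, Nat.cast_zero, zero_smul]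
      exact polyOf_zero
    | insert σ s hσ ih =>
      simp only [Finset.sum_insert hσ]
      have := polyOf_add (fun i => c (i ∘ σ)) (fun i => ∑ σ ∈ s, c (i ∘ σ))
      rw [ih, h] at this
      rw [Finset.card_insert_of_notMem hσ]
      push_cast
      rw [add_smul, one_smul, add_comm _ (polyOf c)]
      exact this
  rw [h2, Finset.card_univ, Fintype.card_perm, Fintype.card_fin]

/-- The symbol of a tensor vanishes exactly when the symmetrization of the tensor does. -/
theorem polyOf_eq_zero_iff {n m : ℕ} (c : (Fin m → Fin n) → SmFun n) :
    polyOf c = 0 ↔ ∀ i, ∑ σ : Equiv.Perm (Fin m), c (i ∘ σ) = 0 := by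
  have hs := polyOf_symmetrize c
  constructor
  · intro h i
    rw [h, smul_zero] at hs
    set s := fun i => ∑ σ : Equiv.Perm (Fin m), c (i ∘ σ) with hsdef
    have hsym (i) (τ : Equiv.Perm (Fin m)) : s (i ∘ τ) = s i := by
      rw [hsdef]
      exact Equiv.sum_comp (Equiv.mulLeft τ) fun σ : Equiv.Perm (Fin m) => c (i ∘ σ)
    have h1 := congrArg (coeff (∑ j, Finsupp.single (i j) 1)) hs
    simp only [polyOf, coeff_sum, coeff_C_mul, prod_X_eq, coeff_monomial, coeff_zero, mul_ite,
      mul_one, mul_zero] at h1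
    -- The coefficient of `polyOf s` at the monomial of `i` is a positive multiple of `s i`.
    rw [← Finset.sum_filter, Finset.sum_congr rfl (g := fun _ => s i), Finset.sum_const,
      ← Nat.cast_smul_eq_nsmul ℝ] at h1
    · have h2 := (smul_eq_zero.1 h1).resolve_left ?_
      · exact h2
      · rw [Nat.cast_eq_zero, Finset.card_eq_zero]
        exact Finset.ne_empty_of_mem (a := i) (by simp)
    · intro i' hi'
      obtain ⟨σ, rfl⟩ := exists_perm i i' (Finset.mem_filter.1 hi').2.symm
      exact hsym i σ
  · intro h
    have : (fun i => ∑ σ : Equiv.Perm (Fin m), c (i ∘ σ)) = 0 := funext h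
    rw [this, polyOf_zero] at hs
    exact (smul_eq_zero.1 hs.symm).resolve_left (by positivity)

/-! ### Degrees -/

theorem isHomogeneous_coefD {n m : ℕ} {P : Sy n} (hP : P.IsHomogeneous m) (a : Fin n) :
    (coefD a P).IsHomogeneous m := by
  intro α hα
  refine hP fun h => hα ?_
  rw [coeff_coefD, h, map_zero]

theorem isHomogeneous_smul {n m : ℕ} {P : Sy n} (hP : P.IsHomogeneous m) (r : ℝ) :
    (r • P).IsHomogeneous m := by
  intro α hα
  refine hP fun h => hα ?_
  rw [coeff_smul, h, smul_zero]

theorem isHomogeneous_lapS {n m : ℕ} {P : Sy n} (hP : P.IsHomogeneous m)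
    (G : Matrix (Fin n) (Fin n) ℝ) : (lapS G P).IsHomogeneous m := by
  rw [lapS_apply]
  exact IsHomogeneous.sum _ _ _ fun a _ => IsHomogeneous.sum _ _ _ fun b _ =>
    isHomogeneous_smul (isHomogeneous_coefD (isHomogeneous_coefD hP b) a) _

theorem isHomogeneous_divS {n m : ℕ} {P : Sy n} (hP : P.IsHomogeneous m) :
    (divS n P).IsHomogeneous (m - 1) := by
  rw [divS_apply]
  exact IsHomogeneous.sum _ _ _ fun a _ => isHomogeneous_coefD hP.pderiv a

theorem isHomogeneous_divS_pow {n m : ℕ} {P : Sy n} (hP : P.IsHomogeneous m) (j : ℕ) :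
    ((divS n ^ j) P).IsHomogeneous (m - j) := by
  induction j with
  | zero => exact hP
  | succ j ih =>
    rw [pow_succ', Module.End.mul_apply]
    exact isHomogeneous_divS ih

/-- Each divergence lowers the degree by one, and kills degree zero. -/
theorem divS_pow_eq_zero {n m : ℕ} {P : Sy n} (hP : P.IsHomogeneous m) :
    (divS n ^ (m + 1)) P = 0 := by
  have h := isHomogeneous_divS_pow hP m
  rw [Nat.sub_self] at h
  rw [pow_succ', Module.End.mul_apply, divS_apply,
    totalDegree_eq_zero_iff_eq_C.1 ((totalDegree_zero_iff_isHomogeneous _).2 h)]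
  simp

/-! ### Operators given by coefficients -/

/-- The full symbol of the operator with the smooth coefficient tensors `d m` of order `m ≤ ℓ`. -/
def symOf {n ℓ : ℕ} (d : (m : Fin (ℓ + 1)) → (Fin (m : ℕ) → Fin n) → SmFun n) : Sy n :=
  ∑ m, polyOf (d m)

theorem symOf_eq_add {n ℓ : ℕ} (d : (m : Fin (ℓ + 1 + 1)) → (Fin (m : ℕ) → Fin n) → SmFun n) :
    symOf d = symOf (fun m : Fin (ℓ + 1) => d m.castSucc) + polyOf (d (Fin.last (ℓ + 1))) :=
  Fin.sum_univ_castSucc _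

theorem homogeneousComponent_symOf {n ℓ : ℕ}
    (d : (m : Fin (ℓ + 1)) → (Fin (m : ℕ) → Fin n) → SmFun n) :
    homogeneousComponent ℓ (symOf d) = polyOf (d (Fin.last ℓ)) := by
  rw [symOf, map_sum, Finset.sum_eq_single (Fin.last ℓ)]
  · rw [homogeneousComponent_of_mem (isHomogeneous_polyOf _), if_pos (by simp)]
  · intro m _ hm
    rw [homogeneousComponent_of_mem (isHomogeneous_polyOf _), if_neg]
    intro h
    exact hm (Fin.ext h.symm)
  · intro h
    exact absurd (Finset.mem_univ _) h

theorem isHomogeneous_flowS_polyOf {n m : ℕ} (G : Matrix (Fin n) (Fin n) ℝ)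
    (c : (Fin m → Fin n) → SmFun n) : (flowS G (polyOf c)).IsHomogeneous (m + 1) := by
  rw [flowS_polyOf]
  exact isHomogeneous_polyOf _

/-- The part of degree `ℓ + 1` of the commutation equation involves only the top-order
coefficients. -/
theorem flowS_polyOf_last {n ℓ : ℕ} (G : Matrix (Fin n) (Fin n) ℝ)
    (d : (m : Fin (ℓ + 1)) → (Fin (m : ℕ) → Fin n) → SmFun n)
    (h : lapS G (symOf d) + (2 : ℝ) • flowS G (symOf d) = 0) :
    flowS G (polyOf (d (Fin.last ℓ))) = 0 := by
  have h1 := congrArg (homogeneousComponent (ℓ + 1)) h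
  have hl : homogeneousComponent (ℓ + 1) (lapS G (symOf d)) = 0 := by
    rw [symOf, map_sum, map_sum]
    refine Finset.sum_eq_zero fun m _ => ?_
    rw [homogeneousComponent_of_mem (isHomogeneous_lapS (isHomogeneous_polyOf _) _), if_neg]
    have := m.2
    omega
  have hf : homogeneousComponent (ℓ + 1) ((2 : ℝ) • flowS G (symOf d))
      = (2 : ℝ) • flowS G (polyOf (d (Fin.last ℓ))) := by
    rw [symOf, map_sum, Finset.smul_sum, map_sum, Finset.sum_eq_single (Fin.last ℓ)]
    · rw [homogeneousComponent_of_mem (isHomogeneous_smul (isHomogeneous_flowS_polyOf _ _) _),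
        if_pos (by simp)]
    · intro m _ hm
      rw [homogeneousComponent_of_mem (isHomogeneous_smul (isHomogeneous_flowS_polyOf _ _) _),
        if_neg]
      intro h
      exact hm (Fin.ext (Nat.succ_injective h).symm)
    · intro h
      exact absurd (Finset.mem_univ _) h
  rw [map_add, hl, hf, zero_add, map_zero] at h1
  exact (smul_eq_zero.1 h1).resolve_left two_ne_zero

/-- Smooth coefficient data, with values in the ring of smooth functions. -/
def smC {n ℓ : ℕ} (c : Coeffs n ℓ) (hc : SmoothCoeffs c) :
    (m : Fin (ℓ + 1)) → (Fin (m : ℕ) → Fin n) → SmFun n :=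
  fun m i => ⟨c m i, hc m i⟩

theorem coe_quant_symOf {n ℓ : ℕ} (c : Coeffs n ℓ) (hc : SmoothCoeffs c) (f : SmFun n) :
    (quant n (symOf (smC c hc)) f : (Fin n → ℝ) → ℝ) = applyOp c f := by
  funext x
  have : (quant n (symOf (smC c hc)) f : (Fin n → ℝ) → ℝ) x
      = ∑ m, (quant n (polyOf (smC c hc m)) f : (Fin n → ℝ) → ℝ) x := by
    simp [symOf]
  rw [this]
  exact Finset.sum_congr rfl fun m _ => quant_polyOf _ f x

theorem commutesWithLap_iff {n ℓ : ℕ} (G : Matrix (Fin n) (Fin n) ℝ) (hG : G.IsSymm)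
    (c : Coeffs n ℓ) (hc : SmoothCoeffs c) :
    CommutesWithLap G c ↔
      lapS G (symOf (smC c hc)) + (2 : ℝ) • flowS G (symOf (smC c hc)) = 0 := by
  have key (f : SmFun n) : lapA G (quant n (symOf (smC c hc)) f) =
      quant n (symOf (smC c hc)) (lapA G f) ↔ ∀ x, lap G (applyOp c f) x
        = applyOp c (lap G f) x := by
    rw [← coe_quant_symOf c hc, ← coe_lapA, ← coe_lapA, ← coe_quant_symOf c hc, ← funext_iff,
      Subtype.ext_iff]
  constructor
  · intro h
    refine quant_injective _ fun f => ?_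
    have := (key f).2 (h f f.2)
    rwa [lapA_quant G hG, add_eq_right] at this
  · intro h f hf
    refine (key ⟨f, hf⟩).1 ?_
    rw [lapA_quant G hG, h, map_zero, LinearMap.zero_apply, zero_add]

/-! ### Killing tensors and principal symbols -/

theorem coe_pdUp {n : ℕ} (G : Matrix (Fin n) (Fin n) ℝ) (a : Fin n) (f : SmFun n) :
    ((∑ b, G a b • pdD b f : SmFun n) : (Fin n → ℝ) → ℝ) = pdUp G a f := by
  funext x
  simp [pdUp]

/-- The kernel of `flowS` on homogeneous symbols is the Killing equation. -/
theorem flowS_polyOf_eq_zero_iff {n m : ℕ} (G : Matrix (Fin n) (Fin n) ℝ)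
    (c : (Fin m → Fin n) → SmFun n) :
    flowS G (polyOf c) = 0 ↔ ∀ (i : Fin (m + 1) → Fin n) (x : Fin n → ℝ),
      ∑ σ : Equiv.Perm (Fin (m + 1)), pdUp G (i (σ 0)) (c fun j => i (σ j.succ)) x = 0 := by
  rw [flowS_polyOf, polyOf_eq_zero_iff]
  refine forall_congr' fun i => ?_
  rw [Subtype.ext_iff, funext_iff]
  refine forall_congr' fun x => ?_
  simp [← coe_pdUp]

/-- The symmetrization of a tensor. -/
def symmC {n m : ℕ} (c : (Fin m → Fin n) → SmFun n) : (Fin m → Fin n) → SmFun n :=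
  (m.factorial : ℝ)⁻¹ • fun i => ∑ σ : Equiv.Perm (Fin m), c (i ∘ σ)

theorem polyOf_symmC {n m : ℕ} (c : (Fin m → Fin n) → SmFun n) :
    polyOf (symmC c) = polyOf c := by
  rw [symmC, polyOf_smul, polyOf_symmetrize, smul_smul, inv_mul_cancel₀ (by positivity), one_smul]

theorem coe_symmC {n ℓ : ℕ} (c : Coeffs n ℓ) (hc : SmoothCoeffs c) (i : Fin ℓ → Fin n) :
    (symmC (smC c hc (Fin.last ℓ)) i : (Fin n → ℝ) → ℝ) = psymb c i := by
  funext x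
  simp [symmC, psymb, smC]

theorem psymb_eq_zero_iff {n ℓ : ℕ} (c : Coeffs n ℓ) (hc : SmoothCoeffs c) :
    psymb c = 0 ↔ polyOf (smC c hc (Fin.last ℓ)) = 0 := by
  rw [polyOf_eq_zero_iff, funext_iff]
  refine forall_congr' fun i => ?_
  rw [← coe_symmC c hc, symmC, Pi.smul_apply]
  have h : (ℓ.factorial : ℝ)⁻¹ ≠ 0 := by positivity
  rw [← smul_eq_zero_iff_right h, Subtype.ext_iff]
  rfl

theorem isKillingTensor_psymb {n ℓ : ℕ} (G : Matrix (Fin n) (Fin n) ℝ) (hG : G.IsSymm)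
    (c : Coeffs n ℓ) (hc : SmoothCoeffs c) (h : CommutesWithLap G c) :
    IsKillingTensor G ℓ (psymb c) := by
  refine ⟨fun i => ?_, fun σ i => ?_, ?_⟩
  · rw [← coe_symmC c hc]
    exact (symmC (smC c hc (Fin.last ℓ)) i).2
  · funext x
    exact congrArg _ (Equiv.sum_comp (Equiv.mulLeft σ)
      fun τ : Equiv.Perm (Fin ℓ) => c (Fin.last ℓ) (i ∘ τ) x)
  · have h1 := flowS_polyOf_last G _ ((commutesWithLap_iff G hG c hc).1 h)
    rw [← polyOf_symmC, flowS_polyOf_eq_zero_iff] at h1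
    intro i x
    have h2 := h1 i x
    simp only [coe_symmC] at h2
    exact h2

/-- A Killing tensor `k` is the principal symbol of the commuting operator with full symbol
`exp (divS / 2) K`, where `K` is the homogeneous symbol of `k`. -/
theorem exists_commuting {n ℓ : ℕ} (G : Matrix (Fin n) (Fin n) ℝ) (hG : G.IsSymm)
    (k : (Fin ℓ → Fin n) → (Fin n → ℝ) → ℝ) (hk : IsKillingTensor G ℓ k) :
    ∃ c : Coeffs n ℓ, SmoothCoeffs c ∧ CommutesWithLap G c ∧ psymb c = k := by
  obtain ⟨hs, hsym, hkill⟩ := hk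
  let k' : (Fin ℓ → Fin n) → SmFun n := fun i => ⟨k i, hs i⟩
  have hK : (polyOf k').IsHomogeneous ℓ := isHomogeneous_polyOf k'
  have hflow : flowS G (polyOf k') = 0 := (flowS_polyOf_eq_zero_iff G k').2 hkill
  -- The series stops at exponent `ℓ`, so both truncations in the commutation identity agree.
  have hcom := lapS_add_flowS_weylSum G _ hflow (ℓ + 1)
  rw [weylSum_succ (ℓ + 1), divS_pow_eq_zero hK, smul_zero, add_zero] at hcom
  -- The term of degree `m` in the momenta is the one with exponent `ℓ - m`.
  have hterm (m : Fin ℓ) : ∃ d : (Fin (m : ℕ) → Fin n) → SmFun n,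
      polyOf d = ((2 : ℝ) ^ (ℓ - m) * (ℓ - m : ℕ).factorial)⁻¹ •
        (divS n ^ (ℓ - m : ℕ)) (polyOf k') := by
    refine exists_polyOf (isHomogeneous_smul ?_ _)
    have := isHomogeneous_divS_pow hK (ℓ - m)
    rwa [Nat.sub_sub_self m.2.le] at this
  choose d hd using hterm
  let e : (m : Fin (ℓ + 1)) → (Fin (m : ℕ) → Fin n) → SmFun n :=
    Fin.snoc (α := fun m : Fin (ℓ + 1) => (Fin (m : ℕ) → Fin n) → SmFun n) d k'
  have he_last : e (Fin.last ℓ) = k' := Fin.snoc_last _ _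
  have he_cast (m : Fin ℓ) : e m.castSucc = d m :=
    Fin.snoc_castSucc (α := fun m : Fin (ℓ + 1) => (Fin (m : ℕ) → Fin n) → SmFun n) _ _ _
  have he : symOf e = weylSum (ℓ + 1) (polyOf k') := by
    rw [symOf, Fin.sum_univ_castSucc, he_last, weylSum, Finset.sum_range_succ']
    congr 1
    · simp only [he_cast]
      rw [← Fin.sum_univ_eq_sum_range (fun j => ((2 : ℝ) ^ (j + 1) * (j + 1).factorial)⁻¹ •
        (divS n ^ (j + 1)) (polyOf k')), ← Equiv.sum_comp Fin.revPerm]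
      refine Finset.sum_congr rfl fun m _ => ?_
      rw [hd, Fin.revPerm_apply, Fin.val_rev, show ℓ - (ℓ - (m + 1)) = m + 1 by omega]
    · simp
  let c : Coeffs n ℓ := fun m i => e m i
  have hc : SmoothCoeffs c := fun m i => (e m i).2
  refine ⟨c, hc, (commutesWithLap_iff G hG c hc).2 ?_, ?_⟩
  · change lapS G (symOf e) + (2 : ℝ) • flowS G (symOf e) = 0
    rw [he, hcom]
  · funext i x
    have hci (i) : c (Fin.last ℓ) i = k i := by
      change ((e (Fin.last ℓ) i : SmFun n) : (Fin n → ℝ) → ℝ) = k i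
      rw [he_last]
    simp only [psymb, hci, hsym, Finset.sum_const, Finset.card_univ, Fintype.card_perm,
      Fintype.card_fin, nsmul_eq_mul]
    exact inv_mul_cancel_left₀ (by positivity) _

/-- The kernel of the principal symbol map, in order `ℓ + 1`. -/
theorem psymb_eq_zero_iff_exists {n ℓ : ℕ} (G : Matrix (Fin n) (Fin n) ℝ) (hG : G.IsSymm)
    (c : Coeffs n (ℓ + 1)) (hc : SmoothCoeffs c) (h : CommutesWithLap G c) :
    psymb c = 0 ↔ ∃ c' : Coeffs n ℓ, SmoothCoeffs c' ∧ CommutesWithLap G c' ∧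
      ∀ f, ContDiff ℝ (⊤ : ℕ∞) f → ∀ x, applyOp c f x = applyOp c' f x := by
  rw [psymb_eq_zero_iff c hc]
  constructor
  · intro h0
    let c' : Coeffs n ℓ := fun m => c m.castSucc
    have hc' : SmoothCoeffs c' := fun m => hc m.castSucc
    have hS : symOf (smC c hc) = symOf (smC c' hc') := by
      rw [symOf_eq_add, h0, add_zero]
      rfl
    refine ⟨c', hc', ?_, fun f hf x => ?_⟩
    · rw [commutesWithLap_iff G hG c' hc', ← hS]
      exact (commutesWithLap_iff G hG c hc).1 h
    · have h1 := coe_quant_symOf c hc ⟨f, hf⟩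
      rw [hS, coe_quant_symOf c' hc'] at h1
      exact (congrFun h1 x).symm
  · rintro ⟨c', hc', -, hop⟩
    have hS : symOf (smC c hc) = symOf (smC c' hc') := by
      rw [← sub_eq_zero]
      refine quant_injective _ fun f => ?_
      rw [map_sub, LinearMap.sub_apply, sub_eq_zero]
      refine Subtype.ext ?_
      rw [coe_quant_symOf, coe_quant_symOf]
      exact funext (hop f f.2)
    rw [← homogeneousComponent_symOf, hS, symOf, map_sum]
    refine Finset.sum_eq_zero fun m _ => ?_
    rw [homogeneousComponent_of_mem (isHomogeneous_polyOf _), if_neg]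
    have := m.2
    omega

/-- the principal symbol map is linear, it sends the space `S_ℓ` of
commuting symmetries of order at most `ℓ` onto the space `𝒦_ℓ` of Killing
`ℓ`-tensors, and its kernel on `S_ℓ` is exactly `S_{ℓ-1}` (a commuting symmetry of
order at most `ℓ` has vanishing principal symbol iff it agrees on smooth functions
with a commuting symmetry of order at most `ℓ-1`). -/
theorem stmt2 {n ℓ : ℕ} (hn : 0 < n) (hℓ : 0 < ℓ)
    (g ginv : Matrix (Fin n) (Fin n) ℝ) (hgsym : g.IsSymm) (hginv : g * ginv = 1) :
    -- linearity of the principal symbol map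
    (∀ c c' : Coeffs n ℓ, psymb (c + c') = psymb c + psymb c') ∧
    (∀ (r : ℝ) (c : Coeffs n ℓ), psymb (r • c) = r • psymb c) ∧
    -- it maps `S_ℓ` into the space of Killing `ℓ`-tensors
    (∀ c : Coeffs n ℓ, SmoothCoeffs c → CommutesWithLap ginv c →
      IsKillingTensor ginv ℓ (psymb c)) ∧
    -- surjectivity onto the space of Killing `ℓ`-tensors
    (∀ k : (Fin ℓ → Fin n) → (Fin n → ℝ) → ℝ, IsKillingTensor ginv ℓ k →
      ∃ c : Coeffs n ℓ, SmoothCoeffs c ∧ CommutesWithLap ginv c ∧ psymb c = k) ∧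
    -- the kernel is `S_{ℓ-1}`
    (∀ c : Coeffs n ℓ, SmoothCoeffs c → CommutesWithLap ginv c →
      (psymb c = 0 ↔
        ∃ c' : Coeffs n (ℓ - 1), SmoothCoeffs c' ∧ CommutesWithLap ginv c' ∧
          ∀ f, ContDiff ℝ (⊤ : ℕ∞) f → ∀ x, applyOp c f x = applyOp c' f x)) := by
  have hG : ginv.IsSymm := by
    have h : g⁻¹ = ginv := Matrix.inv_eq_right_inv hginv
    rw [← h, Matrix.IsSymm, Matrix.transpose_nonsing_inv, hgsym.eq]
  obtain ⟨ℓ, rfl⟩ : ∃ m, ℓ = m + 1 := ⟨ℓ - 1, by omega⟩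
  refine ⟨fun c c' => ?_, fun r c => ?_, isKillingTensor_psymb ginv hG,
    exists_commuting ginv hG, psymb_eq_zero_iff_exists ginv hG⟩
  · funext i x
    simp [psymb, Finset.sum_add_distrib, mul_add]
  · funext i x
    simp only [psymb, Pi.smul_apply, smul_eq_mul, ← Finset.mul_sum]
    ring

end
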